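/- Let k ≥ 3 be an integer, X a finite connected poset, and F a field admitting a primitive (k−1)-th root of unity and such that char(F) does not divide k. Then every bijective F-linear map φ: I(X,F) → I(X,F) that preserves k-potents (φ(f)^k = φ(f) whenever f^k = f) is of the form φ = r·ψ, where r ∈ F satisfies r^{k−1} = 1 and ψ is either an automorphism or an anti-automorphism of I(X,F). -/

import Mathlib

open IncidenceAlgebra

/-- A poset is connected if any two elements can be joined by a sequence of elements
in which consecutive elements are comparable. -/
def PosetConnected (X : Type*) [PartialOrder X] : Prop :=
  ∀ x y : X, Relation.ReflTransGen (fun a b : X => a ≤ b ∨ b ≤ a) x y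

/-!
If `a` and `b` are the images of orthogonal idempotents, then `a + ω b` is a `k`-potent for `ω = 0`
and for every `(k - 1)`-th root of unity `ω`, so the polynomial `(a + b X) ^ k - (a + b X ^ k)`, of
degree less than `k`, has `k` scalar roots and vanishes. Since `(a + b X) ^ k` commutes with
`a + b X`, so do `a` and `b`, and the linear coefficient `k a ^ (k - 1) b = 0` gives `a b = 0`.
Applied to `e` and `1 - e`, this shows that `φ 1` commutes with the image of `φ`; it is thus a
scalar `r`, and `r⁻¹ φ` preserves idempotents. Polarizing over sums of matrix units, `r⁻¹ φ` is a
Jordan homomorphism. Such a map sends each matrix unit `e_xy` to one of the Peirce components that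
homomorphisms and anti-homomorphisms use, and connectedness makes the choice uniform.
-/

section Potents

open Polynomial

variable {F A B : Type*} [Field F] [Ring A] [Algebra F A] [Ring B] [Algebra F B]

lemma eq_zero_of_natDegree_lt_card_of_eval_algebraMap_eq_zero (p : A[X]) (s : Finset F)
    (hp : ∀ ω ∈ s, p.eval (algebraMap F A ω) = 0) (hs : p.natDegree < s.card) : p = 0 := by
  ext j
  rw [coeff_zero, ← Module.forall_dual_apply_eq_zero_iff F]
  intro g
  set q : F[X] := ∑ i ∈ Finset.range (p.natDegree + 1), monomial i (g (p.coeff i)) with hq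
  have q_eval (ω : F) (hω : ω ∈ s) : q.eval ω = 0 := by
    rw [← map_zero g, ← hp ω hω, eval_eq_sum_range (p := p), map_sum, hq, eval_finsetSum]
    refine Finset.sum_congr rfl fun i _ => ?_
    rw [eval_monomial, ← map_pow, ← Algebra.commutes, ← Algebra.smul_def, map_smul, smul_eq_mul,
      mul_comm]
  have q_coeff : q.coeff j = g (p.coeff j) := by
    by_cases hj : p.natDegree < j
    · simp [hq, finsetSum_coeff, coeff_monomial, coeff_eq_zero_of_natDegree_lt hj]
    · simp [hq, finsetSum_coeff, coeff_monomial, Nat.lt_succ_of_le (not_lt.1 hj)]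
  have q_degree : q.natDegree ≤ p.natDegree :=
    natDegree_sum_le_of_forall_le _ _ fun i hi =>
      (natDegree_monomial_le _).trans (Finset.mem_range_succ_iff.1 hi)
  rw [← q_coeff, eq_zero_of_natDegree_lt_card_of_eval_eq_zero' q s q_eval (q_degree.trans_lt hs),
    coeff_zero]

lemma eval_algebraMap_linear_pow (a b : A) (ω : F) (n : ℕ) :
    ((C a + C b * X) ^ n).eval (algebraMap F A ω) = (a + ω • b) ^ n := by
  have central (c : A) : Commute (RingHom.id A c) (algebraMap F A ω) :=
    Algebra.commute_algebraMap_right ω c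
  change eval₂RingHom' (RingHom.id A) (algebraMap F A ω) central _ = _
  rw [map_pow, Algebra.smul_def, Algebra.commutes]
  simp [eval₂RingHom']

lemma natDegree_linear_pow_sub_lt {n : ℕ} (hn : n ≠ 0) {a b : A} (hb : b ^ n = b) :
    ((C a + C b * X) ^ n - (C a + C b * X ^ n)).natDegree < n := by
  have degree_le : ((C a + C b * X) ^ n - (C a + C b * X ^ n)).natDegree ≤ n := by
    compute_degree
  have lead : ((C a + C b * X) ^ n).coeff n = b := by
    have linear_degree : (C a + C b * X).natDegree ≤ 1 := by compute_degree
    have := coeff_pow_of_natDegree_le (m := n) linear_degree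
    rw [mul_one] at this
    simpa [hb] using this
  have := natDegree_le_pred degree_le (by rw [coeff_sub, lead]; simp [coeff_C, hn])
  lia

lemma linear_pow_eq_add_of_isPrimitiveRoot {n : ℕ} (hn : 0 < n) {ε : F} (hε : IsPrimitiveRoot ε n)
    {a b : A} (ha : a ^ (n + 1) = a) (hb : b ^ (n + 1) = b)
    (hab : ∀ ω : F, ω ^ n = 1 → (a + ω • b) ^ (n + 1) = a + ω • b) :
    (C a + C b * X) ^ (n + 1) = C a + C b * X ^ (n + 1) := by
  classical
  have hab' (ω : F) (hω : ω ∈ insert 0 (nthRootsFinset n (1 : F))) :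
      ω ^ (n + 1) = ω ∧ (a + ω • b) ^ (n + 1) = a + ω • b := by
    rcases Finset.mem_insert.1 hω with rfl | hω
    · simp [ha]
    · rw [mem_nthRootsFinset hn] at hω
      exact ⟨by rw [pow_succ, hω, one_mul], hab ω hω⟩
  refine sub_eq_zero.1 <| eq_zero_of_natDegree_lt_card_of_eval_algebraMap_eq_zero _
    (insert 0 (nthRootsFinset n (1 : F))) (fun ω hω => ?_) ?_
  · rw [eval_sub, eval_algebraMap_linear_pow, (hab' ω hω).2, eval_add, eval_C, eval_C_mul,
      eval_X_pow, ← map_pow, (hab' ω hω).1, ← Algebra.commutes, ← Algebra.smul_def, sub_self]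
  · rw [Finset.card_insert_of_notMem (by simp [mem_nthRootsFinset hn, hn.ne']),
      hε.card_nthRootsFinset]
    exact natDegree_linear_pow_sub_lt n.succ_ne_zero hb

lemma coeff_zero_linear_pow (a b : A) (n : ℕ) : ((C a + C b * X) ^ n).coeff 0 = a ^ n := by
  rw [← constantCoeff_apply, map_pow]
  simp

lemma coeff_one_linear_mul (a b : A) (p : A[X]) :
    ((C a + C b * X) * p).coeff 1 = a * p.coeff 1 + b * p.coeff 0 := by
  rw [add_mul, mul_assoc, coeff_add, coeff_C_mul, coeff_C_mul, coeff_X_mul]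

lemma coeff_one_mul_linear (a b : A) (p : A[X]) :
    (p * (C a + C b * X)).coeff 1 = p.coeff 1 * a + p.coeff 0 * b := by
  rw [mul_add, ← mul_assoc, coeff_add, coeff_mul_C, coeff_mul_X, coeff_mul_C]

lemma coeff_one_linear_pow_succ {a b : A} (hab : Commute a b) (n : ℕ) :
    ((C a + C b * X) ^ (n + 1)).coeff 1 = (n + 1) • (a ^ n * b) := by
  induction n with
  | zero => simp
  | succ n ih =>
    rw [pow_succ (C a + C b * X) (n + 1), coeff_one_mul_linear, ih, coeff_zero_linear_pow,
      succ_nsmul (a ^ (n + 1) * b), smul_mul_assoc, mul_assoc, ← hab.eq, ← mul_assoc, ← pow_succ]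

lemma mul_eq_zero_of_isPrimitiveRoot {n : ℕ} (hn : 0 < n) {ε : F} (hε : IsPrimitiveRoot ε n)
    (hnF : ((n + 1 : ℕ) : F) ≠ 0) {a b : A} (ha : a ^ (n + 1) = a) (hb : b ^ (n + 1) = b)
    (hab : ∀ ω : F, ω ^ n = 1 → (a + ω • b) ^ (n + 1) = a + ω • b) : a * b = 0 := by
  have pow_eq := linear_pow_eq_add_of_isPrimitiveRoot hn hε ha hb hab
  have coeff_one : (C a + C b * X ^ (n + 1)).coeff 1 = 0 := by simp [coeff_X_pow, hn.ne']
  have commute : Commute a b := by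
    have := congrArg (coeff · 1) (pow_mul_comm' (C a + C b * X) (n + 1))
    rw [pow_eq, coeff_one_mul_linear, coeff_one_linear_mul, coeff_one] at this
    simpa [commute_iff_eq] using this
  have pow_mul_eq_zero : a ^ n * b = 0 := by
    have := coeff_one_linear_pow_succ commute n
    rw [pow_eq, coeff_one, ← Nat.cast_smul_eq_nsmul F] at this
    exact (smul_eq_zero.1 this.symm).resolve_left hnF
  rw [← ha, pow_succ', mul_assoc, pow_mul_eq_zero, mul_zero]

lemma two_ne_zero_of_isPrimitiveRoot {n : ℕ} (hn : 0 < n) {ε : F} (hε : IsPrimitiveRoot ε n)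
    (hnF : ((n + 1 : ℕ) : F) ≠ 0) : (2 : F) ≠ 0 := by
  have : NeZero n := ⟨hn.ne'⟩
  have hn' : (n : F) ≠ 0 := hε.neZero'.out
  obtain ⟨m, hm⟩ := (Nat.even_mul_succ_self n).two_dvd
  refine left_ne_zero_of_mul (b := (m : F)) ?_
  have := congrArg (Nat.cast : ℕ → F) hm
  push_cast at this hnF
  rw [← this]
  exact mul_ne_zero hn' hnF

lemma add_smul_pow_succ {e f : A} (he : IsIdempotentElem e) (hf : IsIdempotentElem f)
    (hef : e * f = 0) (hfe : f * e = 0) (ω : F) (n : ℕ) :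
    (e + ω • f) ^ (n + 1) = e + ω ^ (n + 1) • f := by
  induction n with
  | zero => simp
  | succ n ih =>
    rw [pow_succ, ih]
    simp [add_mul, mul_add, he.eq, hf.eq, hef, hfe, smul_smul, pow_succ']

lemma map_mul_map_eq_zero_of_preserves_potents {n : ℕ} (hn : 0 < n) {ε : F}
    (hε : IsPrimitiveRoot ε n) (hnF : ((n + 1 : ℕ) : F) ≠ 0) (φ : A →ₗ[F] B)
    (hφ : ∀ f : A, f ^ (n + 1) = f → φ f ^ (n + 1) = φ f) {e f : A}
    (he : IsIdempotentElem e) (hf : IsIdempotentElem f) (hef : e * f = 0) (hfe : f * e = 0) :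
    φ e * φ f = 0 := by
  refine mul_eq_zero_of_isPrimitiveRoot hn hε hnF (hφ e (he.pow_succ_eq n))
    (hφ f (hf.pow_succ_eq n)) fun ω hω => ?_
  rw [← map_smul, ← map_add]
  apply hφ
  rw [add_smul_pow_succ he hf hef hfe, pow_succ, hω, one_mul]

lemma map_mul_map_one_of_preserves_potents {n : ℕ} (hn : 0 < n) {ε : F}
    (hε : IsPrimitiveRoot ε n) (hnF : ((n + 1 : ℕ) : F) ≠ 0) (φ : A →ₗ[F] B)
    (hφ : ∀ f : A, f ^ (n + 1) = f → φ f ^ (n + 1) = φ f) {e : A} (he : IsIdempotentElem e) :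
    φ e * φ 1 = φ e * φ e ∧ φ 1 * φ e = φ e * φ e := by
  have left := map_mul_map_eq_zero_of_preserves_potents hn hε hnF φ hφ he he.one_sub
    he.mul_one_sub_self he.one_sub_mul_self
  have right := map_mul_map_eq_zero_of_preserves_potents hn hε hnF φ hφ he.one_sub he
    he.one_sub_mul_self he.mul_one_sub_self
  rw [map_sub, mul_sub] at left
  rw [map_sub, sub_mul] at right
  exact ⟨sub_eq_zero.1 left, sub_eq_zero.1 right⟩

theorem exists_smul_isIdempotentElem_preserver {n : ℕ} (hn : 0 < n) {ε : F}
    (hε : IsPrimitiveRoot ε n) (hnF : ((n + 1 : ℕ) : F) ≠ 0) [Algebra.IsCentral F B]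
    (hA : Submodule.span F {e : A | IsIdempotentElem e} = ⊤)
    (φ : A →ₗ[F] B) (hbij : Function.Bijective φ)
    (hφ : ∀ f : A, f ^ (n + 1) = f → φ f ^ (n + 1) = φ f) :
    ∃ (r : F) (ψ : A →ₗ[F] B), r ^ n = 1 ∧ Function.Bijective ψ ∧
      (∀ e, IsIdempotentElem e → IsIdempotentElem (ψ e)) ∧ φ = r • ψ := by
  have square (e : A) (he : IsIdempotentElem e) :=
    map_mul_map_one_of_preserves_potents hn hε hnF φ hφ he
  cases subsingleton_or_nontrivial B
  · exact ⟨1, φ, one_pow n, hbij, fun _ _ => Subsingleton.elim _ _, (one_smul F φ).symm⟩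
  have map_one_central : φ 1 ∈ Subalgebra.center F B := by
    rw [Subalgebra.mem_center_iff]
    intro b
    obtain ⟨a, rfl⟩ := hbij.2 b
    have ha : a ∈ Submodule.span F {e : A | IsIdempotentElem e} := hA ▸ Submodule.mem_top
    induction ha using Submodule.span_induction with
    | mem e he => rw [(square e he).1, (square e he).2]
    | zero => simp
    | add a b _ _ iha ihb => rw [map_add, add_mul, mul_add, iha, ihb]
    | smul c a _ ih => rw [map_smul, smul_mul_assoc, mul_smul_comm, ih]
  obtain ⟨r, hr⟩ := Algebra.mem_bot.1 (Algebra.IsCentral.out map_one_central)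
  have hr0 : r ≠ 0 := by
    have : Nontrivial A := hbij.2.nontrivial
    rintro rfl
    exact one_ne_zero (hbij.1 (by rw [← hr, map_zero, map_zero] : φ 1 = φ 0))
  have hrn : r ^ n = 1 := by
    have := hφ 1 (one_pow _)
    rw [← hr, ← map_pow, (FaithfulSMul.algebraMap_injective F B).eq_iff, pow_succ] at this
    exact mul_eq_right₀ hr0 |>.1 this
  refine ⟨r, r⁻¹ • φ, hrn, ?_, fun e he => ?_, (smul_inv_smul₀ hr0 φ).symm⟩
  · exact (MulAction.bijective₀ (inv_ne_zero hr0)).comp hbij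
  · have : φ e * φ e = r • φ e := by
      rw [← (square e he).1, ← hr, ← Algebra.commutes, Algebra.smul_def]
    simp [IsIdempotentElem, this, smul_smul, hr0]

end Potents

section Connectedness

variable {X : Type*} [PartialOrder X]

lemma PosetConnected.eq_of_forall_le {T : Type*} (hX : PosetConnected X) {c : X → T}
    (hc : ∀ x y, x ≤ y → c x = c y) (x y : X) : c x = c y := by
  induction hX x y with
  | refl => rfl
  | tail _ h ih => exact ih.trans (h.elim (hc _ _) fun h => (hc _ _ h).symm)

lemma PosetConnected.forall_or_forall_not (hX : PosetConnected X) {T : X → X → Prop}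
    (chain : ∀ x y z, x < y → y < z → (T x y ↔ T y z))
    (right : ∀ x y v, x < v → y < v → T x v → T y v)
    (left : ∀ x y v, v < x → v < y → T v x → T v y) :
    (∀ x y, x < y → T x y) ∨ ∀ x y, x < y → ¬ T x y := by
  refine or_iff_not_imp_right.2 fun h => ?_
  push Not at h
  obtain ⟨a, b, hab, hT⟩ := h
  have star (v : X) : ∀ w, (v < w → T v w) ∧ (w < v → T w v) := by
    induction hX a v with
    | refl =>
      exact fun w => ⟨fun hw => left b w a hab hw hT, fun hw => (chain w a b hw hab).2 hT⟩
    | @tail c d _ hcd ih =>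
      rcases eq_or_ne c d with rfl | hne
      · exact ih
      rcases hcd with hcd | hdc
      · have hcd := hcd.lt_of_ne hne
        have hT := (ih d).1 hcd
        exact fun w => ⟨fun hw => (chain c d w hcd hw).1 hT, fun hw => right c w d hcd hw hT⟩
      · have hdc := hdc.lt_of_ne hne.symm
        have hT := (ih d).2 hdc
        exact fun w => ⟨fun hw => left c w d hdc hw hT, fun hw => (chain w d c hw hdc).2 hT⟩
  exact fun x y hxy => (star x y).1 hxy

end Connectedness

section JordanDefect

variable {F A B : Type*} [Field F] [Ring A] [Algebra F A] [Ring B] [Algebra F B]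

lemma eq_zero_of_add_self_eq_zero {V : Type*} [AddCommGroup V] [Module F V] (h2 : (2 : F) ≠ 0)
    {v : V} (h : v + v = 0) : v = 0 :=
  (smul_eq_zero.1 ((two_smul F v).trans h)).resolve_left h2

/-- A Jordan homomorphism: a linear map preserving the Jordan product `a * b + b * a`. -/
def IsJordanHom (ψ : A →ₗ[F] B) : Prop :=
  ∀ a b, ψ (a * b + b * a) = ψ a * ψ b + ψ b * ψ a

/-- The Jordan defect of a linear map `ψ`: the symmetric bilinear map
`(a, b) ↦ ψ (a * b + b * a) - (ψ a * ψ b + ψ b * ψ a)`, which vanishes exactly when `ψ` is a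
Jordan homomorphism. -/
def jordanDefect (ψ : A →ₗ[F] B) : A →ₗ[F] A →ₗ[F] B :=
  (LinearMap.mul F A + (LinearMap.mul F A).flip).compr₂ ψ -
    (LinearMap.mul F B + (LinearMap.mul F B).flip).compl₁₂ ψ ψ

lemma jordanDefect_apply (ψ : A →ₗ[F] B) (a b : A) :
    jordanDefect ψ a b = ψ (a * b + b * a) - (ψ a * ψ b + ψ b * ψ a) := rfl

lemma jordanDefect_comm (ψ : A →ₗ[F] B) (a b : A) : jordanDefect ψ a b = jordanDefect ψ b a := by
  rw [jordanDefect_apply, jordanDefect_apply, add_comm (a * b), add_comm (ψ a * ψ b)]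

lemma isJordanHom_of_jordanDefect_eq_zero {ψ : A →ₗ[F] B} (h : jordanDefect ψ = 0) :
    IsJordanHom ψ := fun a b =>
  sub_eq_zero.1 (by rw [← jordanDefect_apply, h, LinearMap.zero_apply, LinearMap.zero_apply])

variable {ψ : A →ₗ[F] B}

lemma jordanDefect_self_eq_zero (hψ : ∀ e, IsIdempotentElem e → IsIdempotentElem (ψ e)) {e : A}
    (he : IsIdempotentElem e) : jordanDefect ψ e e = 0 := by
  rw [jordanDefect_apply, he.eq, (hψ e he).eq, map_add, sub_self]

lemma jordanDefect_eq_zero_of_isIdempotentElem_add (h2 : (2 : F) ≠ 0)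
    (hψ : ∀ e, IsIdempotentElem e → IsIdempotentElem (ψ e)) {e f : A} (he : IsIdempotentElem e)
    (hf : IsIdempotentElem f) (hef : IsIdempotentElem (e + f)) : jordanDefect ψ e f = 0 := by
  apply eq_zero_of_add_self_eq_zero h2
  have := jordanDefect_self_eq_zero hψ hef
  simpa [jordanDefect_self_eq_zero hψ he, jordanDefect_self_eq_zero hψ hf,
    jordanDefect_comm ψ f e] using this

lemma isIdempotentElem_add_of_peirce {R : Type*} [NonUnitalNonAssocSemiring R] {e m : R}
    (he : IsIdempotentElem e) (hem : e * m + m * e = m) (hm : m * m = 0) :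
    IsIdempotentElem (e + m) := by
  calc (e + m) * (e + m) = e * e + (e * m + m * e) + m * m := by
        rw [add_mul, mul_add, mul_add]
        abel
    _ = e + m := by rw [he.eq, hem, hm, add_zero]

lemma jordanDefect_eq_zero_of_peirce (h2 : (2 : F) ≠ 0)
    (hψ : ∀ e, IsIdempotentElem e → IsIdempotentElem (ψ e)) {e m : A} (he : IsIdempotentElem e)
    (hem : e * m + m * e = m) (hm : m * m = 0) :
    jordanDefect ψ e m = 0 ∧ jordanDefect ψ m m = 0 := by
  have plus := jordanDefect_self_eq_zero hψ (isIdempotentElem_add_of_peirce he hem hm)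
  have minus := jordanDefect_self_eq_zero hψ (isIdempotentElem_add_of_peirce he (m := -m)
    (by rw [mul_neg, neg_mul, ← neg_add, hem]) (by rw [neg_mul_neg, hm]))
  simp only [map_add, map_neg, LinearMap.add_apply, LinearMap.neg_apply,
    jordanDefect_self_eq_zero hψ he, jordanDefect_comm ψ m e, zero_add] at plus minus
  have mm : jordanDefect ψ m m = 0 := by
    apply eq_zero_of_add_self_eq_zero h2
    linear_combination (norm := abel) plus + minus
  refine ⟨eq_zero_of_add_self_eq_zero h2 ?_, mm⟩
  rwa [mm, add_zero] at plus

lemma jordanDefect_eq_zero_of_peirce_of_peirce (h2 : (2 : F) ≠ 0)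
    (hψ : ∀ e, IsIdempotentElem e → IsIdempotentElem (ψ e)) {e m n : A} (he : IsIdempotentElem e)
    (hem : e * m + m * e = m) (hm : m * m = 0) (hen : e * n + n * e = n) (hn : n * n = 0)
    (hmn : m * n = 0) (hnm : n * m = 0) : jordanDefect ψ m n = 0 := by
  have add := (jordanDefect_eq_zero_of_peirce h2 hψ he (m := m + n)
    (by rw [mul_add, add_mul, add_add_add_comm, hem, hen])
    (by simp [mul_add, add_mul, hm, hn, hmn, hnm])).2
  apply eq_zero_of_add_self_eq_zero h2
  simpa [(jordanDefect_eq_zero_of_peirce h2 hψ he hem hm).2,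
    (jordanDefect_eq_zero_of_peirce h2 hψ he hen hn).2, jordanDefect_comm ψ n m] using add

end JordanDefect

section MatrixUnits

variable {X R : Type*} [PartialOrder X] [Semiring R]

open Classical in
/-- The matrix unit `e_xy` of the incidence algebra: the function with value `1` at `(x, y)` and
`0` elsewhere. For `¬ x ≤ y`, when there is no such element, it is `0`. -/
noncomputable def matrixUnit (R : Type*) [Zero R] [One R] (x y : X) : IncidenceAlgebra R X :=
  ⟨fun a b => if a = x ∧ b = y ∧ x ≤ y then 1 else 0,
    fun _ _ h => if_neg fun ⟨hax, hby, hxy⟩ => h (hax ▸ hby ▸ hxy)⟩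

open Classical in
lemma matrixUnit_apply {x y : X} (h : x ≤ y) (a b : X) :
    matrixUnit R x y a b = if a = x ∧ b = y then 1 else 0 := by
  simp [matrixUnit, h]

lemma matrixUnit_of_not_le {x y : X} (h : ¬ x ≤ y) : matrixUnit R x y = 0 := by
  ext
  simp [matrixUnit, h]

lemma matrixUnit_ne_zero [Nontrivial R] {x y : X} (h : x ≤ y) : matrixUnit R x y ≠ 0 := fun h0 => by
  simpa [matrixUnit_apply h] using congrArg (· x y) h0

lemma incidenceAlgebra_sum_apply {ι : Type*} (s : Finset ι) (f : ι → IncidenceAlgebra R X)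
    (a b : X) : (∑ i ∈ s, f i) a b = ∑ i ∈ s, f i a b := by
  classical
  induction s using Finset.induction_on with
  | empty => simp
  | insert i s hi ih =>
    rw [Finset.sum_insert hi, Finset.sum_insert hi, IncidenceAlgebra.add_apply, ih]

open Classical in
lemma sum_smul_matrixUnit [Fintype X] (f : IncidenceAlgebra R X) :
    ∑ p : X × X, f p.1 p.2 • matrixUnit R p.1 p.2 = f := by
  ext a b hab
  rw [incidenceAlgebra_sum_apply, Finset.sum_eq_single (a, b)]
  · simp [matrixUnit_apply hab]
  · rintro ⟨x, y⟩ _ hxy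
    have entry : matrixUnit R x y a b = 0 :=
      if_neg fun ⟨hax, hby, _⟩ => hxy (Prod.ext hax.symm hby.symm)
    rw [constSMul_apply, entry, smul_zero]
  · simp

lemma span_range_matrixUnit [Finite X] :
    Submodule.span R (Set.range fun p : X × X => matrixUnit R p.1 p.2) = ⊤ := by
  cases nonempty_fintype X
  refine eq_top_iff.2 fun f _ => ?_
  rw [← sum_smul_matrixUnit f]
  exact Submodule.sum_smul_mem _ _ fun p _ => Submodule.subset_span ⟨p, rfl⟩

lemma linearMap_ext_matrixUnit [Finite X] {V : Type*} [AddCommMonoid V] [Module R V]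
    {S T : IncidenceAlgebra R X →ₗ[R] V}
    (h : ∀ x y, x ≤ y → S (matrixUnit R x y) = T (matrixUnit R x y)) : S = T := by
  refine LinearMap.ext_on_range span_range_matrixUnit fun ⟨x, y⟩ => ?_
  by_cases hxy : x ≤ y
  · exact h x y hxy
  · simp only [matrixUnit_of_not_le hxy, map_zero]

lemma one_eq_sum_matrixUnit [Fintype X] [DecidableEq X] :
    (1 : IncidenceAlgebra R X) = ∑ x, matrixUnit R x x := by
  ext a b _
  rw [incidenceAlgebra_sum_apply, one_apply]
  simp only [matrixUnit_apply le_rfl]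
  split_ifs with h
  · simp [h]
  · exact (Finset.sum_eq_zero fun x _ => if_neg fun hx => h (hx.1.trans hx.2.symm)).symm

variable [LocallyFiniteOrder X]

open Classical in
lemma mul_matrixUnit_apply (f : IncidenceAlgebra R X) {x y : X} (h : x ≤ y) (a b : X) :
    (f * matrixUnit R x y) a b = if b = y then f a x else 0 := by
  rw [mul_apply]
  simp only [matrixUnit_apply h]
  split_ifs with hb
  · subst hb
    simp only [and_true, mul_ite, mul_one, mul_zero, Finset.sum_ite_eq', Finset.mem_Icc, h]
    exact ite_eq_left_iff.2 fun hax => (apply_eq_zero_of_not_le hax f).symm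
  · simp [hb]

open Classical in
lemma matrixUnit_mul_apply (f : IncidenceAlgebra R X) {x y : X} (h : x ≤ y) (a b : X) :
    (matrixUnit R x y * f) a b = if a = x then f y b else 0 := by
  rw [mul_apply]
  simp only [matrixUnit_apply h]
  split_ifs with ha
  · subst ha
    simp only [true_and, ite_mul, one_mul, zero_mul, Finset.sum_ite_eq', Finset.mem_Icc, h]
    exact ite_eq_left_iff.2 fun hyb => (apply_eq_zero_of_not_le hyb f).symm
  · simp [ha]

lemma matrixUnit_mul_matrixUnit {x y z : X} (hxy : x ≤ y) (hyz : y ≤ z) :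
    matrixUnit R x y * matrixUnit R y z = matrixUnit R x z := by
  ext a b
  rw [mul_matrixUnit_apply _ hyz, matrixUnit_apply hxy, matrixUnit_apply (hxy.trans hyz)]
  grind

lemma matrixUnit_mul_matrixUnit_of_ne {x y u v : X} (hxy : x ≤ y) (huv : u ≤ v) (hyu : y ≠ u) :
    matrixUnit R x y * matrixUnit R u v = 0 := by
  ext a b
  simp [mul_matrixUnit_apply _ huv, matrixUnit_apply hxy, hyu.symm]

lemma matrixUnit_mul_self {x y : X} (hxy : x < y) : matrixUnit R x y * matrixUnit R x y = 0 :=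
  matrixUnit_mul_matrixUnit_of_ne hxy.le hxy.le hxy.ne'

lemma matrixUnit_left_peirce {x y : X} (hxy : x < y) :
    matrixUnit R x x * matrixUnit R x y + matrixUnit R x y * matrixUnit R x x =
      matrixUnit R x y := by
  rw [matrixUnit_mul_matrixUnit le_rfl hxy.le,
    matrixUnit_mul_matrixUnit_of_ne hxy.le le_rfl hxy.ne', add_zero]

lemma matrixUnit_right_peirce {x y : X} (hxy : x < y) :
    matrixUnit R y y * matrixUnit R x y + matrixUnit R x y * matrixUnit R y y =
      matrixUnit R x y := by
  rw [matrixUnit_mul_matrixUnit hxy.le le_rfl,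
    matrixUnit_mul_matrixUnit_of_ne le_rfl hxy.le hxy.ne', zero_add]

lemma isIdempotentElem_matrixUnit_self (x : X) : IsIdempotentElem (matrixUnit R x x) :=
  matrixUnit_mul_matrixUnit le_rfl le_rfl

lemma isIdempotentElem_matrixUnit_self_add {x y : X} (hxy : x ≠ y) :
    IsIdempotentElem (matrixUnit R x x + matrixUnit R y y) :=
  (isIdempotentElem_matrixUnit_self x).add (isIdempotentElem_matrixUnit_self y) (by
    rw [matrixUnit_mul_matrixUnit_of_ne le_rfl le_rfl hxy,
      matrixUnit_mul_matrixUnit_of_ne le_rfl le_rfl hxy.symm, add_zero])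

lemma matrixUnit_self_mul_mul_matrixUnit_self (f : IncidenceAlgebra R X) (x y : X) :
    matrixUnit R x x * f * matrixUnit R y y = f x y • matrixUnit R x y := by
  ext a b
  rw [mul_matrixUnit_apply _ le_rfl, matrixUnit_mul_apply _ le_rfl, constSMul_apply]
  by_cases hxy : x ≤ y
  · rw [matrixUnit_apply hxy, smul_eq_mul]
    grind
  · rw [matrixUnit_of_not_le hxy, apply_eq_zero_of_not_le hxy]
    simp

lemma mul_matrixUnit_self_mul_ne_zero [NoZeroDivisors R] {f g : IncidenceAlgebra R X} {x : X}
    (hf : f * matrixUnit R x x ≠ 0) (hg : matrixUnit R x x * g ≠ 0) :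
    f * matrixUnit R x x * g ≠ 0 := by
  obtain ⟨a, ha⟩ : ∃ a, f a x ≠ 0 := by
    by_contra! hfx
    exact hf (by ext a b; simp [mul_matrixUnit_apply _ le_rfl, hfx])
  obtain ⟨d, hd⟩ : ∃ d, g x d ≠ 0 := by
    by_contra! hgx
    exact hg (by ext a b; simp [matrixUnit_mul_apply _ le_rfl, hgx])
  have hax : a ≤ x := not_imp_comm.1 (apply_eq_zero_of_not_le · f) ha
  have hxd : x ≤ d := not_imp_comm.1 (apply_eq_zero_of_not_le · g) hd
  have entry : (f * matrixUnit R x x * g) a d = f a x * g x d := by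
    rw [mul_apply, Finset.sum_eq_single_of_mem x (Finset.mem_Icc.2 ⟨hax, hxd⟩)]
    · simp [mul_matrixUnit_apply _ le_rfl]
    · intro z _ hz
      simp [mul_matrixUnit_apply _ le_rfl, hz]
  intro h0
  rw [h0, IncidenceAlgebra.zero_apply] at entry
  exact mul_ne_zero ha hd entry.symm

lemma span_isIdempotentElem_incidenceAlgebra {R : Type*} [Ring R] [Finite X] :
    Submodule.span R {e : IncidenceAlgebra R X | IsIdempotentElem e} = ⊤ := by
  rw [eq_top_iff, ← span_range_matrixUnit, Submodule.span_le]
  rintro _ ⟨⟨x, y⟩, rfl⟩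
  have subset_span {e : IncidenceAlgebra R X} (he : IsIdempotentElem e) :=
    Submodule.subset_span (R := R) (s := {e : IncidenceAlgebra R X | IsIdempotentElem e}) he
  by_cases hxy : x < y
  · have hx := isIdempotentElem_matrixUnit_self (R := R) x
    have add : IsIdempotentElem (matrixUnit R x x + matrixUnit R x y) :=
      isIdempotentElem_add_of_peirce hx (matrixUnit_left_peirce hxy) (matrixUnit_mul_self hxy)
    simpa using sub_mem (subset_span add) (subset_span hx)
  by_cases hx : x = y
  · subst hx
    exact subset_span (isIdempotentElem_matrixUnit_self x)
  · simp only [matrixUnit_of_not_le fun h => hxy (lt_of_le_of_ne h hx)]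
    exact zero_mem _

theorem PosetConnected.isCentral_incidenceAlgebra {R : Type*} [CommRing R] [DecidableEq X]
    (hX : PosetConnected X) :
    Algebra.IsCentral R (IncidenceAlgebra R X) where
  out u hu := by
    rw [Subalgebra.mem_center_iff] at hu
    have hu' (x y a b : X) (hxy : x ≤ y) := congrArg (· a b) (hu (matrixUnit R x y))
    have diagonal (x y : X) (hxy : x ≤ y) : u x x = u y y := by
      simpa [mul_matrixUnit_apply _ hxy, matrixUnit_mul_apply _ hxy, eq_comm] using hu' x y x y hxy
    have off_diagonal (x y : X) (hxy : x ≠ y) : u x y = 0 := by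
      simpa [mul_matrixUnit_apply _ le_rfl, matrixUnit_mul_apply _ le_rfl, hxy.symm]
        using hu' x x x y le_rfl
    rcases isEmpty_or_nonempty X with _ | ⟨⟨x₀⟩⟩
    · exact ⟨0, by ext a; exact isEmptyElim a⟩
    · refine Algebra.mem_bot.2 ⟨u x₀ x₀, ?_⟩
      ext a b hab
      rw [Algebra.algebraMap_eq_smul_one, constSMul_apply, one_apply]
      split_ifs with h
      · subst h
        simp [hX.eq_of_forall_le diagonal x₀ a]
      · simp [off_diagonal a b h]

end MatrixUnits

section PreservesIdempotents

variable {X F B : Type*} [PartialOrder X] [LocallyFiniteOrder X] [DecidableEq X] [Field F] [Ring B]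
  [Algebra F B] {ψ : IncidenceAlgebra F X →ₗ[F] B}

lemma jordanDefect_matrixUnit_self_self (h2 : (2 : F) ≠ 0)
    (hψ : ∀ e, IsIdempotentElem e → IsIdempotentElem (ψ e)) (x y : X) :
    jordanDefect ψ (matrixUnit F x x) (matrixUnit F y y) = 0 := by
  rcases eq_or_ne x y with rfl | hxy
  · exact jordanDefect_self_eq_zero hψ (isIdempotentElem_matrixUnit_self x)
  · exact jordanDefect_eq_zero_of_isIdempotentElem_add h2 hψ (isIdempotentElem_matrixUnit_self x)
      (isIdempotentElem_matrixUnit_self y) (isIdempotentElem_matrixUnit_self_add hxy)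

lemma jordanDefect_matrixUnit_self_of_lt (h2 : (2 : F) ≠ 0)
    (hψ : ∀ e, IsIdempotentElem e → IsIdempotentElem (ψ e)) (z : X) {x y : X} (hxy : x < y) :
    jordanDefect ψ (matrixUnit F z z) (matrixUnit F x y) = 0 := by
  have left := (jordanDefect_eq_zero_of_peirce h2 hψ (isIdempotentElem_matrixUnit_self x)
    (matrixUnit_left_peirce hxy) (matrixUnit_mul_self hxy)).1
  rcases eq_or_ne z x with rfl | hzx
  · exact left
  rcases eq_or_ne z y with rfl | hzy
  · exact (jordanDefect_eq_zero_of_peirce h2 hψ (isIdempotentElem_matrixUnit_self z)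
      (matrixUnit_right_peirce hxy) (matrixUnit_mul_self hxy)).1
  have add := (jordanDefect_eq_zero_of_peirce h2 hψ (m := matrixUnit F x y)
    (isIdempotentElem_matrixUnit_self_add hzx)
    (by rw [add_mul, mul_add, matrixUnit_mul_matrixUnit_of_ne le_rfl hxy.le hzx,
      matrixUnit_mul_matrixUnit_of_ne hxy.le le_rfl hzy.symm, zero_add, zero_add,
      matrixUnit_left_peirce hxy])
    (matrixUnit_mul_self hxy)).1
  rwa [map_add, LinearMap.add_apply, left, add_zero] at add

lemma jordanDefect_matrixUnit_of_lt_of_lt (h2 : (2 : F) ≠ 0)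
    (hψ : ∀ e, IsIdempotentElem e → IsIdempotentElem (ψ e)) {x y u v : X} (hxy : x < y)
    (huv : u < v) (hyu : y ≠ u) (hvx : v ≠ x) :
    jordanDefect ψ (matrixUnit F x y) (matrixUnit F u v) = 0 := by
  have xy_uv : matrixUnit F x y * matrixUnit F u v = 0 :=
    matrixUnit_mul_matrixUnit_of_ne hxy.le huv.le hyu
  have uv_xy : matrixUnit F u v * matrixUnit F x y = 0 :=
    matrixUnit_mul_matrixUnit_of_ne huv.le hxy.le hvx
  rcases eq_or_ne x u with rfl | hxu
  · exact jordanDefect_eq_zero_of_peirce_of_peirce h2 hψ (isIdempotentElem_matrixUnit_self x)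
      (matrixUnit_left_peirce hxy) (matrixUnit_mul_self hxy) (matrixUnit_left_peirce huv)
      (matrixUnit_mul_self huv) xy_uv uv_xy
  · refine jordanDefect_eq_zero_of_peirce_of_peirce h2 hψ
      (isIdempotentElem_matrixUnit_self_add hxu) ?_ (matrixUnit_mul_self hxy) ?_
      (matrixUnit_mul_self huv) xy_uv uv_xy
    · rw [add_mul, mul_add, matrixUnit_mul_matrixUnit_of_ne le_rfl hxy.le hxu.symm,
        matrixUnit_mul_matrixUnit_of_ne hxy.le le_rfl hyu, add_zero, add_zero,
        matrixUnit_left_peirce hxy]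
    · rw [add_mul, mul_add, matrixUnit_mul_matrixUnit_of_ne le_rfl huv.le hxu,
        matrixUnit_mul_matrixUnit_of_ne huv.le le_rfl hvx, zero_add, zero_add,
        matrixUnit_left_peirce huv]

-- `e_yy + e_xy` is an idempotent, and `e_yz + e_xz` is its Peirce component of type `(1, 0)`.
lemma jordanDefect_matrixUnit_of_lt_trans (h2 : (2 : F) ≠ 0)
    (hψ : ∀ e, IsIdempotentElem e → IsIdempotentElem (ψ e)) {x y z : X} (hxy : x < y)
    (hyz : y < z) : jordanDefect ψ (matrixUnit F x y) (matrixUnit F y z) = 0 := by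
  have hxz := hxy.trans hyz
  have idem : IsIdempotentElem (matrixUnit F y y + matrixUnit F x y) :=
    isIdempotentElem_add_of_peirce (isIdempotentElem_matrixUnit_self y)
      (matrixUnit_right_peirce hxy) (matrixUnit_mul_self hxy)
  have left_mul : (matrixUnit F y y + matrixUnit F x y) * (matrixUnit F y z + matrixUnit F x z) =
      matrixUnit F y z + matrixUnit F x z := by
    rw [mul_add, add_mul, add_mul, matrixUnit_mul_matrixUnit le_rfl hyz.le,
      matrixUnit_mul_matrixUnit hxy.le hyz.le,
      matrixUnit_mul_matrixUnit_of_ne le_rfl hxz.le hxy.ne',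
      matrixUnit_mul_matrixUnit_of_ne hxy.le hxz.le hxy.ne', add_zero, add_zero]
  have mul_eq_zero_of_not_top {u v : X} (huv : u ≤ v) (hzu : z ≠ u) :
      (matrixUnit F y z + matrixUnit F x z) * matrixUnit F u v = 0 := by
    rw [add_mul, matrixUnit_mul_matrixUnit_of_ne hyz.le huv hzu,
      matrixUnit_mul_matrixUnit_of_ne hxz.le huv hzu, add_zero]
  have defect := (jordanDefect_eq_zero_of_peirce h2 hψ idem
    (by rw [left_mul, mul_add, mul_eq_zero_of_not_top le_rfl hyz.ne',
      mul_eq_zero_of_not_top hxy.le hxz.ne', add_zero, add_zero])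
    (by rw [mul_add, mul_eq_zero_of_not_top hyz.le hyz.ne',
      mul_eq_zero_of_not_top hxz.le hxz.ne', add_zero])).1
  simpa [jordanDefect_matrixUnit_self_of_lt h2 hψ y hyz,
    jordanDefect_matrixUnit_self_of_lt h2 hψ y hxz,
    jordanDefect_matrixUnit_of_lt_of_lt h2 hψ hxy hxz hxy.ne' hxz.ne'] using defect

theorem isJordanHom_of_preserves_idempotents [Finite X] (h2 : (2 : F) ≠ 0)
    (hψ : ∀ e, IsIdempotentElem e → IsIdempotentElem (ψ e)) : IsJordanHom ψ := by
  refine isJordanHom_of_jordanDefect_eq_zero <| linearMap_ext_matrixUnit fun x y hxy =>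
    linearMap_ext_matrixUnit fun u v huv => ?_
  rw [LinearMap.zero_apply, LinearMap.zero_apply]
  rcases hxy.eq_or_lt with rfl | hxy
  · rcases huv.eq_or_lt with rfl | huv
    · exact jordanDefect_matrixUnit_self_self h2 hψ x u
    · exact jordanDefect_matrixUnit_self_of_lt h2 hψ x huv
  rcases huv.eq_or_lt with rfl | huv
  · rw [jordanDefect_comm, jordanDefect_matrixUnit_self_of_lt h2 hψ u hxy]
  rcases eq_or_ne y u with rfl | hyu
  · exact jordanDefect_matrixUnit_of_lt_trans h2 hψ hxy huv
  rcases eq_or_ne v x with rfl | hvx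
  · rw [jordanDefect_comm, jordanDefect_matrixUnit_of_lt_trans h2 hψ huv hxy]
  · exact jordanDefect_matrixUnit_of_lt_of_lt h2 hψ hxy huv hyu hvx

end PreservesIdempotents

lemma mul_eq_zero_of_absorbs {R : Type*} [SemigroupWithZero R] {a b e f : R} (hef : e * f = 0)
    (ha : a * e = a) (hb : f * b = b) : a * b = 0 := by
  rw [← ha, ← hb, mul_assoc, ← mul_assoc e, hef, zero_mul, mul_zero]

section JordanHom

variable {F A B : Type*} [Field F] [Ring A] [Algebra F A] [Ring B] [Algebra F B]
  {ψ : A →ₗ[F] B}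

lemma IsJordanHom.map_mul_self (hψ : IsJordanHom ψ) (h2 : (2 : F) ≠ 0) (a : A) :
    ψ (a * a) = ψ a * ψ a := by
  refine sub_eq_zero.1 (eq_zero_of_add_self_eq_zero h2 ?_)
  have := hψ a a
  rw [map_add] at this
  linear_combination (norm := abel) this

lemma IsJordanHom.map_mul_mul_self (hψ : IsJordanHom ψ) (h2 : (2 : F) ≠ 0) (a b : A) :
    ψ (a * b * a) = ψ a * ψ b * ψ a := by
  refine sub_eq_zero.1 (eq_zero_of_add_self_eq_zero h2 ?_)
  have outer := hψ (a * b + b * a) a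
  have square := hψ (a * a) b
  rw [hψ a b] at outer
  rw [hψ.map_mul_self h2] at square
  have expand : (a * b + b * a) * a + a * (a * b + b * a) =
      a * b * a + a * b * a + (a * a * b + b * (a * a)) := by noncomm_ring
  rw [expand, map_add, map_add, square] at outer
  linear_combination (norm := noncomm_ring) outer

lemma IsJordanHom.map_mul_mul_add (hψ : IsJordanHom ψ) (h2 : (2 : F) ≠ 0) (a b c : A) :
    ψ (a * b * c + c * b * a) = ψ a * ψ b * ψ c + ψ c * ψ b * ψ a := by
  have expand : a * b * c + c * b * a = (a + c) * b * (a + c) - a * b * a - c * b * c := by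
    noncomm_ring
  rw [expand, map_sub, map_sub]
  simp only [hψ.map_mul_mul_self h2, map_add]
  noncomm_ring

lemma IsJordanHom.map_mul_map_eq_zero (hψ : IsJordanHom ψ) (h2 : (2 : F) ≠ 0) {e f : A}
    (he : IsIdempotentElem e) (hef : e * f = 0) (hfe : f * e = 0) : ψ e * ψ f = 0 := by
  have anticomm : ψ e * ψ f = -(ψ f * ψ e) := by
    rw [eq_neg_iff_add_eq_zero, ← hψ, hef, hfe, add_zero, map_zero]
  have triple : ψ e * ψ f * ψ e = 0 := by
    rw [← hψ.map_mul_mul_self h2, hef, zero_mul, map_zero]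
  calc ψ e * ψ f = ψ e * (ψ e * ψ f) := by rw [← mul_assoc, ← hψ.map_mul_self h2, he.eq]
    _ = 0 := by rw [anticomm, mul_neg, ← mul_assoc, triple, neg_zero]

lemma IsJordanHom.op (hψ : IsJordanHom ψ) :
    IsJordanHom ((MulOpposite.opLinearEquiv F).toLinearMap ∘ₗ ψ) := fun a b => by
  simp only [LinearMap.comp_apply, hψ a b]
  simp [add_comm]

end JordanHom

section PeirceDecomposition

variable {X F B : Type*} [PartialOrder X] [Field F] [Ring B] [Algebra F B]
  {ψ : IncidenceAlgebra F X →ₗ[F] B}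

/-- `ψ` is direct at `(x, y)` if it sends the matrix unit `e_xy` into the Peirce component
`ψ e_xx * B * ψ e_yy`, as homomorphisms do. -/
def IsDirectAt (ψ : IncidenceAlgebra F X →ₗ[F] B) (x y : X) : Prop :=
  ψ (matrixUnit F x x) * ψ (matrixUnit F x y) = ψ (matrixUnit F x y) ∧
    ψ (matrixUnit F x y) * ψ (matrixUnit F y y) = ψ (matrixUnit F x y)

/-- `ψ` is reversed at `(x, y)` if it sends the matrix unit `e_xy` into the Peirce component
`ψ e_yy * B * ψ e_xx`, as anti-homomorphisms do. -/
def IsReversedAt (ψ : IncidenceAlgebra F X →ₗ[F] B) (x y : X) : Prop :=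
  ψ (matrixUnit F y y) * ψ (matrixUnit F x y) = ψ (matrixUnit F x y) ∧
    ψ (matrixUnit F x y) * ψ (matrixUnit F x x) = ψ (matrixUnit F x y)

lemma isDirectAt_op_iff {x y : X} :
    IsDirectAt ((MulOpposite.opLinearEquiv F).toLinearMap ∘ₗ ψ) x y ↔ IsReversedAt ψ x y := by
  simp [IsDirectAt, IsReversedAt, ← MulOpposite.op_mul, and_comm]

lemma isReversedAt_op_iff {x y : X} :
    IsReversedAt ((MulOpposite.opLinearEquiv F).toLinearMap ∘ₗ ψ) x y ↔ IsDirectAt ψ x y := by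
  simp [IsDirectAt, IsReversedAt, ← MulOpposite.op_mul, and_comm]

variable [LocallyFiniteOrder X] [DecidableEq X]

lemma IsJordanHom.isIdempotentElem_map_matrixUnit (hψ : IsJordanHom ψ) (h2 : (2 : F) ≠ 0) (x : X) :
    IsIdempotentElem (ψ (matrixUnit F x x)) := by
  rw [IsIdempotentElem, ← hψ.map_mul_self h2, (isIdempotentElem_matrixUnit_self x).eq]

lemma IsJordanHom.map_matrixUnit_mul_map_matrixUnit (hψ : IsJordanHom ψ) (h2 : (2 : F) ≠ 0)
    {x y : X} (hxy : x ≠ y) : ψ (matrixUnit F x x) * ψ (matrixUnit F y y) = 0 :=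
  hψ.map_mul_map_eq_zero h2 (isIdempotentElem_matrixUnit_self x)
    (matrixUnit_mul_matrixUnit_of_ne le_rfl le_rfl hxy)
    (matrixUnit_mul_matrixUnit_of_ne le_rfl le_rfl hxy.symm)

lemma IsJordanHom.map_matrixUnit_mul_map_mul_self (hψ : IsJordanHom ψ) (h2 : (2 : F) ≠ 0)
    (f : IncidenceAlgebra F X) (x : X) :
    ψ (matrixUnit F x x) * ψ f * ψ (matrixUnit F x x) = f x x • ψ (matrixUnit F x x) := by
  rw [← hψ.map_mul_mul_self h2, matrixUnit_self_mul_mul_matrixUnit_self, map_smul]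

lemma IsJordanHom.peirce_add_peirce (hψ : IsJordanHom ψ) (h2 : (2 : F) ≠ 0)
    (f : IncidenceAlgebra F X) {x y : X} (hxy : x < y) :
    ψ (matrixUnit F x x) * ψ f * ψ (matrixUnit F y y) +
      ψ (matrixUnit F y y) * ψ f * ψ (matrixUnit F x x) = f x y • ψ (matrixUnit F x y) := by
  rw [← hψ.map_mul_mul_add h2, matrixUnit_self_mul_mul_matrixUnit_self,
    matrixUnit_self_mul_mul_matrixUnit_self, apply_eq_zero_of_not_le hxy.not_ge, zero_smul,
    add_zero, map_smul]

lemma IsJordanHom.isDirectAt_self (hψ : IsJordanHom ψ) (h2 : (2 : F) ≠ 0) (x : X) :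
    IsDirectAt ψ x x :=
  ⟨hψ.isIdempotentElem_map_matrixUnit h2 x, hψ.isIdempotentElem_map_matrixUnit h2 x⟩

-- Pulling back the direct Peirce component of `ψ e_xy` along `ψ` shows that it is a multiple of
-- `ψ e_xy`, so one of the two components of `ψ e_xy` vanishes.
lemma IsJordanHom.isDirectAt_or_isReversedAt (hψ : IsJordanHom ψ) (h2 : (2 : F) ≠ 0)
    (hsurj : Function.Surjective ψ) {x y : X} (hxy : x < y) :
    IsDirectAt ψ x y ∨ IsReversedAt ψ x y := by
  have hx := hψ.isIdempotentElem_map_matrixUnit h2 x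
  have hy := hψ.isIdempotentElem_map_matrixUnit h2 y
  have hyx0 := hψ.map_matrixUnit_mul_map_matrixUnit h2 hxy.ne'
  have decomp := hψ.peirce_add_peirce h2 (matrixUnit F x y) hxy
  rw [matrixUnit_apply hxy.le, if_pos ⟨rfl, rfl⟩, one_smul] at decomp
  obtain ⟨a, ha⟩ := hsurj
    (ψ (matrixUnit F x x) * ψ (matrixUnit F x y) * ψ (matrixUnit F y y))
  have pullback := hψ.peirce_add_peirce h2 a hxy
  rw [ha, ← mul_assoc, ← mul_assoc, hx.eq, mul_assoc _ (ψ (matrixUnit F y y)), hy.eq, ← mul_assoc,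
    ← mul_assoc, hyx0, zero_mul, zero_mul, zero_mul, add_zero] at pullback
  rcases eq_or_ne (a x y) 0 with ha0 | ha0
  · rw [pullback, ha0, zero_smul, zero_add] at decomp
    right
    constructor
    · rw [← decomp, ← mul_assoc, ← mul_assoc, hy.eq]
    · rw [← decomp, mul_assoc, hx.eq]
  · have left_zero : ψ (matrixUnit F y y) * ψ (matrixUnit F x y) = 0 := by
      apply (smul_eq_zero.1 _).resolve_left ha0
      rw [← mul_smul_comm, ← pullback, ← mul_assoc, ← mul_assoc, hyx0, zero_mul, zero_mul]
    rw [left_zero, zero_mul, add_zero] at decomp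
    left
    constructor
    · rw [← decomp, ← mul_assoc, ← mul_assoc, hx.eq]
    · rw [← decomp, mul_assoc, hy.eq]

lemma IsJordanHom.not_isReversedAt_of_isDirectAt_of_lt_trans (hψ : IsJordanHom ψ)
    (h2 : (2 : F) ≠ 0) (hinj : Function.Injective ψ) {x y z : X} (hxy : x < y) (hyz : y < z)
    (direct : IsDirectAt ψ x y) : ¬ IsReversedAt ψ y z := by
  intro reversed
  have jordan := hψ (matrixUnit F x y) (matrixUnit F y z)
  rw [matrixUnit_mul_matrixUnit hxy.le hyz.le,
    matrixUnit_mul_matrixUnit_of_ne hyz.le hxy.le (hxy.trans hyz).ne', add_zero,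
    mul_eq_zero_of_absorbs (hψ.map_matrixUnit_mul_map_matrixUnit h2 hyz.ne) direct.2 reversed.1,
    mul_eq_zero_of_absorbs (hψ.map_matrixUnit_mul_map_matrixUnit h2 hxy.ne') reversed.2 direct.1,
    add_zero] at jordan
  exact matrixUnit_ne_zero (hxy.trans hyz).le (hinj (jordan.trans (map_zero ψ).symm))

lemma IsJordanHom.map_mul_of_isDirectAt [Finite X] (hψ : IsJordanHom ψ) (h2 : (2 : F) ≠ 0)
    (direct : ∀ x y, x < y → IsDirectAt ψ x y) (f g : IncidenceAlgebra F X) :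
    ψ (f * g) = ψ f * ψ g := by
  have direct' (x y : X) (hxy : x ≤ y) : IsDirectAt ψ x y :=
    hxy.eq_or_lt.elim (fun h => h ▸ hψ.isDirectAt_self h2 x) (direct x y)
  suffices key : (LinearMap.mul F (IncidenceAlgebra F X)).compr₂ ψ =
      (LinearMap.mul F B).compl₁₂ ψ ψ from
    LinearMap.congr_fun₂ key f g
  refine linearMap_ext_matrixUnit fun x y hxy => linearMap_ext_matrixUnit fun u v huv => ?_
  change ψ (matrixUnit F x y * matrixUnit F u v) = ψ (matrixUnit F x y) * ψ (matrixUnit F u v)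
  rcases eq_or_ne y u with rfl | hyu
  · rw [matrixUnit_mul_matrixUnit hxy huv]
    rcases hxy.eq_or_lt with rfl | hxy
    · exact (direct' x v huv).1.symm
    rcases huv.eq_or_lt with rfl | huv
    · exact (direct' x y hxy.le).2.symm
    have jordan := hψ (matrixUnit F x y) (matrixUnit F y v)
    have hvx := (hxy.trans huv).ne'
    rwa [matrixUnit_mul_matrixUnit hxy.le huv.le,
      matrixUnit_mul_matrixUnit_of_ne huv.le hxy.le hvx, add_zero,
      mul_eq_zero_of_absorbs (hψ.map_matrixUnit_mul_map_matrixUnit h2 hvx)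
        (direct y v huv).2 (direct x y hxy).1, add_zero] at jordan
  · rw [matrixUnit_mul_matrixUnit_of_ne hxy huv hyu, map_zero,
      mul_eq_zero_of_absorbs (hψ.map_matrixUnit_mul_map_matrixUnit h2 hyu)
        (direct' x y hxy).2 (direct' u v huv).1]

end PeirceDecomposition

section Connected

variable {X Y F : Type*} [PartialOrder X] [LocallyFiniteOrder X] [DecidableEq X]
  [PartialOrder Y] [LocallyFiniteOrder Y] [DecidableEq Y] [Field F]
  {ψ : IncidenceAlgebra F X →ₗ[F] IncidenceAlgebra F Y}

lemma mul_ne_zero_of_absorbs_of_corner [Finite Y] {p f g : IncidenceAlgebra F Y}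
    (hp : IsIdempotentElem p) (corner : ∀ h, ∃ c : F, p * h * p = c • p) (hfp : f * p = f)
    (hpg : p * g = g) (hf : f ≠ 0) (hg : g ≠ 0) : f * g ≠ 0 := by
  cases nonempty_fintype Y
  obtain ⟨y, hy⟩ : ∃ y, p * matrixUnit F y y * p ≠ 0 := by
    by_contra! h
    apply hf
    have p_eq_zero : p = 0 := calc
      p = p * 1 * p := by rw [mul_one, hp.eq]
      _ = 0 := by
        rw [one_eq_sum_matrixUnit, Finset.mul_sum, Finset.sum_mul,
          Finset.sum_eq_zero fun y _ => h y]
    rw [← hfp, p_eq_zero, mul_zero]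
  obtain ⟨c, hc⟩ := corner (matrixUnit F y y)
  have hc0 : c ≠ 0 := by
    rintro rfl
    exact hy (hc.trans (zero_smul F p))
  have f_unit : f * matrixUnit F y y * p = c • f := by
    rw [← hfp, mul_assoc f, mul_assoc, hc, mul_smul_comm, hfp]
  have unit_g : p * (matrixUnit F y y * g) = c • g := by
    rw [← hpg, ← mul_assoc _ p, ← mul_assoc, ← mul_assoc, hc, smul_mul_assoc, hpg]
  have product : f * matrixUnit F y y * g = c • (f * g) := by
    rw [← hpg, ← mul_assoc, f_unit, smul_mul_assoc, hpg]
  have ne_zero : f * matrixUnit F y y * g ≠ 0 := by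
    apply mul_matrixUnit_self_mul_ne_zero
    · exact left_ne_zero_of_mul (f_unit ▸ smul_ne_zero hc0 hf)
    · exact right_ne_zero_of_mul (unit_g ▸ smul_ne_zero hc0 hg)
  rw [product] at ne_zero
  exact right_ne_zero_of_smul ne_zero

lemma IsJordanHom.map_mul_map_ne_zero [Finite Y] (hψ : IsJordanHom ψ) (h2 : (2 : F) ≠ 0) (x : X)
    {f g : IncidenceAlgebra F Y} (hf : f * ψ (matrixUnit F x x) = f)
    (hg : ψ (matrixUnit F x x) * g = g) (hf0 : f ≠ 0) (hg0 : g ≠ 0)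
    (hsurj : Function.Surjective ψ) : f * g ≠ 0 :=
  mul_ne_zero_of_absorbs_of_corner (hψ.isIdempotentElem_map_matrixUnit h2 x)
    (hsurj.forall.2 fun a => ⟨a x x, hψ.map_matrixUnit_mul_map_mul_self h2 a x⟩) hf hg hf0 hg0

lemma IsJordanHom.not_isReversedAt_of_isDirectAt_of_lt_right [Finite Y] (hψ : IsJordanHom ψ)
    (h2 : (2 : F) ≠ 0) (hbij : Function.Bijective ψ) {x y v : X} (hxv : x < v) (hyv : y < v)
    (hxy : x ≠ y) (direct : IsDirectAt ψ x v) : ¬ IsReversedAt ψ y v := by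
  intro reversed
  have jordan := hψ (matrixUnit F x v) (matrixUnit F y v)
  rw [matrixUnit_mul_matrixUnit_of_ne hxv.le hyv.le hyv.ne',
    matrixUnit_mul_matrixUnit_of_ne hyv.le hxv.le hxv.ne', add_zero, map_zero,
    mul_eq_zero_of_absorbs (hψ.map_matrixUnit_mul_map_matrixUnit h2 hxy.symm) reversed.2 direct.1,
    add_zero] at jordan
  exact hψ.map_mul_map_ne_zero h2 v direct.2 reversed.1
    ((map_ne_zero_iff ψ hbij.1).2 (matrixUnit_ne_zero hxv.le))
    ((map_ne_zero_iff ψ hbij.1).2 (matrixUnit_ne_zero hyv.le)) hbij.2 jordan.symm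

lemma IsJordanHom.not_isReversedAt_of_isDirectAt_of_lt_left [Finite Y] (hψ : IsJordanHom ψ)
    (h2 : (2 : F) ≠ 0) (hbij : Function.Bijective ψ) {x y v : X} (hvx : v < x) (hvy : v < y)
    (hxy : x ≠ y) (direct : IsDirectAt ψ v x) : ¬ IsReversedAt ψ v y := by
  intro reversed
  have jordan := hψ (matrixUnit F v x) (matrixUnit F v y)
  rw [matrixUnit_mul_matrixUnit_of_ne hvx.le hvy.le hvx.ne',
    matrixUnit_mul_matrixUnit_of_ne hvy.le hvx.le hvy.ne', add_zero, map_zero,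
    mul_eq_zero_of_absorbs (hψ.map_matrixUnit_mul_map_matrixUnit h2 hxy) direct.2 reversed.1,
    zero_add] at jordan
  exact hψ.map_mul_map_ne_zero h2 v reversed.2 direct.1
    ((map_ne_zero_iff ψ hbij.1).2 (matrixUnit_ne_zero hvy.le))
    ((map_ne_zero_iff ψ hbij.1).2 (matrixUnit_ne_zero hvx.le)) hbij.2 jordan.symm

theorem IsJordanHom.forall_isDirectAt_or_forall_isReversedAt [Finite Y] (hψ : IsJordanHom ψ)
    (h2 : (2 : F) ≠ 0) (hX : PosetConnected X) (hbij : Function.Bijective ψ) :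
    (∀ x y, x < y → IsDirectAt ψ x y) ∨ ∀ x y, x < y → IsReversedAt ψ x y := by
  have direct_or_reversed {x y : X} (hxy : x < y) : IsDirectAt ψ x y ∨ IsReversedAt ψ x y :=
    hψ.isDirectAt_or_isReversedAt h2 hbij.2 hxy
  have op_injective :
      Function.Injective ((MulOpposite.opLinearEquiv F).toLinearMap ∘ₗ ψ) :=
    (MulOpposite.opLinearEquiv F).injective.comp hbij.1
  refine (hX.forall_or_forall_not (T := IsDirectAt ψ)
    (fun x y z hxy hyz => ⟨fun h => ?_, fun h => ?_⟩) (fun x y v hxv hyv h => ?_)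
    (fun x y v hvx hvy h => ?_)).imp_right fun h x y hxy =>
      (direct_or_reversed hxy).resolve_left (h x y hxy)
  · exact (direct_or_reversed hyz).resolve_right
      (hψ.not_isReversedAt_of_isDirectAt_of_lt_trans h2 hbij.1 hxy hyz h)
  · refine (direct_or_reversed hxy).resolve_right fun reversed => ?_
    exact hψ.op.not_isReversedAt_of_isDirectAt_of_lt_trans h2 op_injective hxy hyz
      (isDirectAt_op_iff.2 reversed) (isReversedAt_op_iff.2 h)
  · rcases eq_or_ne x y with rfl | hxy
    · exact h
    · exact (direct_or_reversed hyv).resolve_right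
        (hψ.not_isReversedAt_of_isDirectAt_of_lt_right h2 hbij hxv hyv hxy h)
  · rcases eq_or_ne x y with rfl | hxy
    · exact h
    · exact (direct_or_reversed hvy).resolve_right
        (hψ.not_isReversedAt_of_isDirectAt_of_lt_left h2 hbij hvx hvy hxy h)

theorem IsJordanHom.map_mul_or_map_mul_reverse [Finite X] [Finite Y] (hψ : IsJordanHom ψ)
    (h2 : (2 : F) ≠ 0) (hX : PosetConnected X) (hbij : Function.Bijective ψ) :
    (∀ f g, ψ (f * g) = ψ f * ψ g) ∨ ∀ f g, ψ (f * g) = ψ g * ψ f := by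
  refine (hψ.forall_isDirectAt_or_forall_isReversedAt h2 hX hbij).imp
    (hψ.map_mul_of_isDirectAt h2) fun reversed f g => MulOpposite.op_injective ?_
  exact hψ.op.map_mul_of_isDirectAt h2 (fun x y hxy => isDirectAt_op_iff.2 (reversed x y hxy)) f g

end Connected

theorem stmt_18_general {k : ℕ} (hk : 2 ≤ k)
    {X Y F : Type*} [PartialOrder X] [Finite X] [LocallyFiniteOrder X] [DecidableEq X]
    [PartialOrder Y] [Finite Y] [LocallyFiniteOrder Y] [DecidableEq Y] [Field F]
    {ε : F} (hε : IsPrimitiveRoot ε (k - 1)) (hkF : (k : F) ≠ 0)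
    (hX : PosetConnected X) (hY : PosetConnected Y)
    (φ : IncidenceAlgebra F X →ₗ[F] IncidenceAlgebra F Y) (hbij : Function.Bijective φ)
    (hpres : ∀ f : IncidenceAlgebra F X, f ^ k = f → φ f ^ k = φ f) :
    ∃ (r : F) (ψ : IncidenceAlgebra F X →ₗ[F] IncidenceAlgebra F Y),
      r ^ (k - 1) = 1 ∧ Function.Bijective ψ ∧
      ((∀ f g, ψ (f * g) = ψ f * ψ g) ∨ ∀ f g, ψ (f * g) = ψ g * ψ f) ∧ φ = r • ψ := by
  obtain ⟨n, rfl⟩ : ∃ n, k = n + 1 := ⟨k - 1, by lia⟩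
  have hn : 0 < n := by lia
  rw [Nat.add_sub_cancel] at hε ⊢
  have : Algebra.IsCentral F (IncidenceAlgebra F Y) := hY.isCentral_incidenceAlgebra
  have h2 := two_ne_zero_of_isPrimitiveRoot hn hε hkF
  obtain ⟨r, ψ, hr, hψbij, hψ, hφ⟩ := exists_smul_isIdempotentElem_preserver hn hε hkF
    span_isIdempotentElem_incidenceAlgebra φ hbij hpres
  exact ⟨r, ψ, hr, hψbij,
    (isJordanHom_of_preserves_idempotents h2 hψ).map_mul_or_map_mul_reverse h2 hX hψbij, hφ⟩

/-- for `k ≥ 3` over a field with a primitive `(k−1)`-th root of unity and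
`char F ∤ k`, every bijective linear `k`-potent preserver of the incidence algebra of a finite
connected poset is `r·ψ` with `r^{k−1} = 1` and `ψ` an automorphism or anti-automorphism. -/
theorem stmt_18 (k : ℕ) (hk : 3 ≤ k)
    {X : Type*} [PartialOrder X] [Fintype X] [LocallyFiniteOrder X] [DecidableEq X]
    {F : Type*} [Field F]
    (hroot : ∃ ε : F, ε ^ (k - 1) = 1 ∧ ∀ m : ℕ, 0 < m → m < k - 1 → ε ^ m ≠ 1)
    (hchar : ¬ ringChar F ∣ k)
    (hconn : PosetConnected X)
    (φ : IncidenceAlgebra F X →ₗ[F] IncidenceAlgebra F X)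
    (hbij : Function.Bijective φ)
    (hpres : ∀ f : IncidenceAlgebra F X, f ^ k = f → (φ f) ^ k = φ f) :
    ∃ (r : F) (ψ : IncidenceAlgebra F X →ₗ[F] IncidenceAlgebra F X),
      r ^ (k - 1) = 1 ∧ Function.Bijective ψ ∧
      ((∀ f g : IncidenceAlgebra F X, ψ (f * g) = ψ f * ψ g) ∨
        (∀ f g : IncidenceAlgebra F X, ψ (f * g) = ψ g * ψ f)) ∧
      φ = r • ψ := by
  obtain ⟨ε, hε, hε'⟩ := hroot
  exact stmt_18_general (by lia) (IsPrimitiveRoot.mk_of_lt ε (by lia) hε hε')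
    (mt (ringChar.spec F k).1 hchar) hconn hconn φ hbij hpres
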